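/- Let L' = ℤ[a_i : i ∈ ℤ] be the polynomial ring over ℤ in a family of indeterminates indexed by ℤ and let K' be its fraction field. Suppose t : ℤ × ℕ → K' satisfies t_{i,0} = 1 and t_{i,1} = a_i for all i ∈ ℤ, and the recurrence t_{i,n} · t_{i+1,n} = t_{i,n+1} · t_{i+1,n-1} + 1 for all i ∈ ℤ and n ≥ 1. Then for every i ∈ ℤ and n ≥ 1, t_{i,n} equals the determinant of the n×n tridiagonal matrix whose diagonal entries, from top-left to bottom-right, are a_{i+n-1}, a_{i+n-2}, …, a_i, whose superdiagonal entries are all 1, and whose subdiagonal entries are all 1. -/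

import Mathlib

/-- The `n × n` tridiagonal matrix whose diagonal entries, from top-left to bottom-right,
are `x (i+n-1), x (i+n-2), …, x i`, whose superdiagonal entries are all `1`, and whose
subdiagonal entries, from top to bottom, are `q (i+n-1), …, q (i+1)`. -/
def triMat {R : Type*} [CommRing R] (q x : ℤ → R) (i : ℤ) (n : ℕ) :
    Matrix (Fin n) (Fin n) R :=
  Matrix.of fun j k =>
    if (j : ℕ) = (k : ℕ) then x (i + (n : ℤ) - 1 - (j : ℕ))
    else if (j : ℕ) + 1 = (k : ℕ) then 1
    else if (k : ℕ) + 1 = (j : ℕ) then q (i + (n : ℤ) - 1 - (k : ℕ))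
    else 0

/-- The tridiagonal determinant `D_{i,n}(q,x)`; by convention `D_{i,0}(q,x) = 1`. -/
def triDet {R : Type*} [CommRing R] (q x : ℤ → R) (i : ℤ) (n : ℕ) : R :=
  (triMat q x i n).det

/-- The polynomial ring `L' = ℤ[a_i : i ∈ ℤ]`. -/
abbrev L' := MvPolynomial ℤ ℤ

/-- The fraction field `K'` of `L'`. -/
abbrev K' := FractionRing L'

/-- The indeterminate `a_i`. -/
noncomputable def avar (i : ℤ) : L' := MvPolynomial.X i

/-! The recurrence expresses `t_{i,n+1}` through shorter entries as soon as `t_{i+1,n-1}` can be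
cancelled, so it has at most one solution with given `t_{i,0}` and `t_{i,1}`. The tridiagonal
determinants form a solution: by their three-term recurrence, the defect
`D_{i,n} D_{i+1,n} - D_{i,n+1} D_{i+1,n-1}` is multiplied by a single subdiagonal entry when `n`
grows by one, so it is a product of subdiagonal entries. They do not vanish because each of them
takes the value `1` at some choice of the indeterminates. -/

section Tridiagonal

variable {R : Type*} [CommRing R]

theorem det_of_apply_zero_succ_succ_eq_zero {n : ℕ} (A : Matrix (Fin (n + 2)) (Fin (n + 2)) R)
    (hrow : ∀ k : Fin n, A 0 k.succ.succ = 0) (hcol : ∀ j : Fin n, A j.succ.succ 0 = 0) :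
    A.det = A 0 0 * (A.submatrix Fin.succ Fin.succ).det -
      A 0 1 * A 1 0 * (A.submatrix (Fin.succ ∘ Fin.succ) (Fin.succ ∘ Fin.succ)).det := by
  have hminor : (A.submatrix Fin.succ (Fin.succAbove 1)).det =
      A 1 0 * (A.submatrix (Fin.succ ∘ Fin.succ) (Fin.succ ∘ Fin.succ)).det := by
    have hcols : Fin.succAbove (1 : Fin (n + 2)) ∘ Fin.succ = Fin.succ ∘ Fin.succ := by
      funext k
      simp [Fin.one_succAbove_succ]
    simp [Matrix.det_succ_column_zero, Fin.sum_univ_succ, hcol, hcols]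
  have hexpand : A.det = A 0 0 * (A.submatrix Fin.succ Fin.succ).det -
      A 0 1 * (A.submatrix Fin.succ (Fin.succAbove 1)).det := by
    simp [Matrix.det_succ_row_zero A, Fin.sum_univ_succ, hrow, sub_eq_add_neg]
  rw [hexpand, hminor, mul_assoc]

variable (q x : ℤ → R) (i : ℤ)

theorem triDet_zero : triDet q x i 0 = 1 :=
  Matrix.det_fin_zero

theorem triDet_one : triDet q x i 1 = x i := by
  simp [triDet, triMat]

theorem map_triDet {S : Type*} [CommRing S] (f : R →+* S) (n : ℕ) :
    f (triDet q x i n) = triDet (fun k => f (q k)) (fun k => f (x k)) i n := by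
  rw [triDet, f.map_det, triDet]
  congr 1
  ext j k
  simp [triMat, apply_ite f]

theorem triMat_submatrix_succ_succ (n : ℕ) :
    (triMat q x i (n + 1)).submatrix Fin.succ Fin.succ = triMat q x i n := by
  have hindex (m : ℕ) : i + ((n + 1 : ℕ) : ℤ) - 1 - ((m + 1 : ℕ) : ℤ) = i + n - 1 - m := by
    push_cast
    ring
  ext j k
  simp only [triMat, Matrix.submatrix_apply, Matrix.of_apply, Fin.val_succ, hindex, add_left_inj]

theorem triDet_add_two (n : ℕ) :
    triDet q x i (n + 2) =
      x (i + n + 1) * triDet q x i (n + 1) - q (i + n + 1) * triDet q x i n := by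
  have hindex : i + ((n : ℤ) + 2) - 1 = i + n + 1 := by ring
  rw [triDet, det_of_apply_zero_succ_succ_eq_zero _ (by simp [triMat]) (by simp [triMat]),
    ← Matrix.submatrix_submatrix, triMat_submatrix_succ_succ, triMat_submatrix_succ_succ]
  simp [triMat, triDet, hindex]

theorem triDet_mul_triDet_add_one (n : ℕ) :
    triDet q x i (n + 1) * triDet q x (i + 1) (n + 1) =
      triDet q x i (n + 2) * triDet q x (i + 1) n + ∏ k ∈ Finset.range (n + 1), q (i + k + 1) := by
  induction n with
  | zero => simp [triDet_add_two, triDet_zero, triDet_one, mul_comm]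
  | succ n ih =>
    have hleft := triDet_add_two q x i (n + 1)
    have hright := triDet_add_two q x (i + 1) n
    rw [show i + 1 + (n : ℤ) + 1 = i + (n + 1 : ℕ) + 1 by push_cast; ring] at hright
    rw [Finset.prod_range_succ, hleft, hright]
    linear_combination q (i + (n + 1 : ℕ) + 1) * ih

theorem triDet_update_eq_one (n : ℕ) :
    triDet q (Function.update (fun k => q k + 1) i 1) i n = 1 := by
  induction n using Nat.twoStepInduction with
  | zero => exact triDet_zero ..
  | one => simp [triDet_one]
  | more n ih ih' =>
    have hne : i + n + 1 ≠ i := by omega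
    rw [triDet_add_two, ih, ih', Function.update_of_ne hne]
    ring

theorem triDet_C_X_ne_zero [Nontrivial R] (n : ℕ) :
    triDet (fun k => MvPolynomial.C (q k)) (MvPolynomial.X : ℤ → MvPolynomial ℤ R) i n ≠ 0 := by
  intro h
  have heval := congrArg (MvPolynomial.eval (Function.update (fun k => q k + 1) i 1)) h
  simp [map_triDet, triDet_update_eq_one] at heval

end Tridiagonal

theorem generalized_chebyshev_det_general {K : Type*} [CommRing K] (q x : ℤ → K)
    (hreg : ∀ (i : ℤ) (n : ℕ), IsRegular (triDet q x i n)) (t : ℤ × ℕ → K)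
    (h0 : ∀ i : ℤ, t (i, 0) = 1)
    (h1 : ∀ i : ℤ, t (i, 1) = x i)
    (hrec : ∀ (i : ℤ) (n : ℕ), t (i, n + 1) * t (i + 1, n + 1) =
      t (i, n + 2) * t (i + 1, n) + ∏ k ∈ Finset.range (n + 1), q (i + k + 1))
    (i : ℤ) (n : ℕ) :
    t (i, n) = triDet q x i n := by
  induction n using Nat.twoStepInduction generalizing i with
  | zero => rw [h0, triDet_zero]
  | one => rw [h1, triDet_one]
  | more n ih ih' =>
    have hmul : t (i, n + 2) * triDet q x (i + 1) n =
        triDet q x i (n + 2) * triDet q x (i + 1) n := by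
      have ht := hrec i n
      rw [ih', ih', ih, triDet_mul_triDet_add_one] at ht
      exact (add_right_cancel ht).symm
    exact (hreg (i + 1) n).right hmul

theorem isRegular_triDet_algebraMap_avar (i : ℤ) (n : ℕ) :
    IsRegular (triDet (fun _ => 1) (fun k => algebraMap L' K' (avar k)) i n) := by
  have hne := (map_ne_zero_iff _ (IsFractionRing.injective L' K')).mpr
    (triDet_C_X_ne_zero (fun _ => (1 : ℤ)) i n)
  simp only [map_triDet, map_one] at hne
  exact .of_ne_zero hne

/-- Lemma 4.6: if `t : ℤ × ℕ → K'` satisfies `t_{i,0} = 1`, `t_{i,1} = a_i` and the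
recurrence `t_{i,n} t_{i+1,n} = t_{i,n+1} t_{i+1,n-1} + 1` for `n ≥ 1`, then `t_{i,n}`
is the tridiagonal determinant with diagonal `a_{i+n-1}, …, a_i`, superdiagonal `1`
and subdiagonal `1`. -/
theorem generalized_chebyshev_det (t : ℤ × ℕ → K')
    (h0 : ∀ i : ℤ, t (i, 0) = 1)
    (h1 : ∀ i : ℤ, t (i, 1) = algebraMap L' K' (avar i))
    (hrec : ∀ (i : ℤ) (n : ℕ), 1 ≤ n →
      t (i, n) * t (i + 1, n) = t (i, n + 1) * t (i + 1, n - 1) + 1) :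
    ∀ (i : ℤ) (n : ℕ), 1 ≤ n →
      t (i, n) = algebraMap L' K' (triDet (fun _ => 1) avar i n) := by
  intro i n _
  rw [map_triDet, map_one]
  exact generalized_chebyshev_det_general _ _ isRegular_triDet_algebraMap_avar t h0 h1
    (fun i n => by simpa using hrec i (n + 1) n.succ_pos) i n
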